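/- arXiv:2602.16384 — 2 statements merged into one kernel-verified Lean document; each statement's English description precedes it below -/
import Mathlib

section
/- Let k be a field and n a positive integer. The Chevalley map p: gl_n → A^n sending a matrix to the coefficients of its characteristic polynomial is flat. -/
section Aux
open MvPolynomial

lemma flat_of_bij {P S : Type*} [CommRing P] [CommRing S] (f : P →+* S) {ι : Type*}
    (v : ι → S)
    (h : Function.Bijective (fun w : ι →₀ P => w.sum (fun b p => f p * v b))) : f.Flat := by
  algebraize [f]
  rw [RingHom.Flat]
  have : Function.Bijective (Finsupp.linearCombination P v) := by
    have e : ⇑(Finsupp.linearCombination P v) =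
        (fun w : ι →₀ P => w.sum (fun b p => f p * v b)) := by
      funext w
      rw [Finsupp.linearCombination_apply]
      rfl
    rw [e]; exact h
  exact Module.Flat.of_linearEquiv (LinearEquiv.ofBijective _ this).symm

noncomputable def bigPhi {k : Type*} [Field k] {σ : Type*} (d : σ → ℕ)
    (z : σ → MvPolynomial σ k) :
    ({b : σ →₀ ℕ // ∀ s, b s < d s} →₀ MvPolynomial σ k) →ₗ[k] MvPolynomial σ k :=
  Finsupp.lsum k (fun b => (LinearMap.mulRight k (monomial b.1 (1 : k))) ∘ₗ
    (aeval z : MvPolynomial σ k →ₐ[k] MvPolynomial σ k).toLinearMap)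

lemma bigPhi_single {k : Type*} [Field k] {σ : Type*} (d : σ → ℕ)
    (z : σ → MvPolynomial σ k) (b) (p : MvPolynomial σ k) :
    bigPhi d z (Finsupp.single b p) = aeval z p * monomial b.1 1 := by
  simp [bigPhi]

lemma bigPhi_apply {k : Type*} [Field k] {σ : Type*} (d : σ → ℕ)
    (z : σ → MvPolynomial σ k) (w) :
    bigPhi d z w = w.sum (fun b p => aeval z p * monomial b.1 1) := by
  simp [bigPhi, Finsupp.sum]

lemma bigPhi_smul {k : Type*} [Field k] {σ : Type*} (d : σ → ℕ)
    (z : σ → MvPolynomial σ k) (p : MvPolynomial σ k) (w) :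
    bigPhi d z (p • w) = aeval z p * bigPhi d z w := by
  induction w using Finsupp.induction_linear with
  | zero => simp
  | add f g hf hg => rw [smul_add, map_add, map_add, hf, hg, mul_add]
  | single b q => rw [Finsupp.smul_single, bigPhi_single, bigPhi_single, smul_eq_mul, map_mul,
      mul_assoc]

lemma bigPhi_surj {k : Type*} [Field k] {σ : Type*} (d : σ → ℕ)
    (hd : ∀ s, 0 < d s)
    (z : σ → MvPolynomial σ k) (hz : ∀ s, (z s).IsHomogeneous (d s))
    (hT : ∀ f : MvPolynomial σ k, ∃ t ∈ Submodule.span k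
      (Set.range fun b : {b : σ →₀ ℕ // ∀ s, b s < d s} => (monomial b.1 (1 : k))),
      f - t ∈ Ideal.span (Set.range z)) :
    Function.Surjective (bigPhi d z) := by
  rw [← LinearMap.range_eq_top]
  set W := LinearMap.range (bigPhi d z) with hW
  have hb : ∀ b : {b : σ →₀ ℕ // ∀ s, b s < d s}, monomial b.1 (1 : k) ∈ W := fun b =>
    ⟨Finsupp.single b 1, by simp [bigPhi_single]⟩
  have hzW : ∀ s, ∀ f ∈ W, z s * f ∈ W := by
    rintro s _ ⟨w, rfl⟩
    exact ⟨(X s : MvPolynomial σ k) • w, by simp [bigPhi_smul]⟩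
  have key : ∀ m : ℕ, ∀ u : σ →₀ ℕ, u.degree = m → ∀ a : k, monomial u a ∈ W := by
    intro m
    induction m using Nat.strong_induction_on with
    | _ m ih =>
    intro u hu a
    obtain ⟨t, ht, hI⟩ := hT (monomial u a)
    have h1 : homogeneousComponent m t ∈ W := by
      have : Submodule.span k
        (Set.range fun b : {b : σ →₀ ℕ // ∀ s, b s < d s} => (monomial b.1 (1 : k))) ≤
          W.comap (homogeneousComponent m) := by
        rw [Submodule.span_le]
        rintro _ ⟨b, rfl⟩
        show homogeneousComponent m _ ∈ W
        rw [homogeneousComponent_of_mem (isHomogeneous_monomial 1 rfl)]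
        split_ifs
        · exact hb b
        · exact W.zero_mem
      exact this ht
    have hmul : ∀ s g, homogeneousComponent m (z s * g) ∈ W := by
      intro s g
      induction g using MvPolynomial.induction_on' with
      | monomial v c =>
        rw [homogeneousComponent_of_mem ((hz s).mul (isHomogeneous_monomial c rfl))]
        split_ifs with h
        · exact hzW s _ (ih v.degree (by have := hd s; omega) v rfl c)
        · exact W.zero_mem
      | add p q hp hq => rw [mul_add, map_add]; exact W.add_mem hp hq
    have h2 : homogeneousComponent m (monomial u a - t) ∈ W := by
      refine Submodule.span_induction (p := fun f _ => ∀ g, homogeneousComponent m (g * f) ∈ W)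
        ?_ ?_ ?_ ?_ hI 1 |> fun h => by simpa using h
      · rintro _ ⟨s, rfl⟩ g
        rw [mul_comm]; exact hmul s g
      · simp
      · intro x y _ _ hx hy g
        rw [mul_add, map_add]; exact W.add_mem (hx g) (hy g)
      · intro c x _ hx g
        rw [smul_eq_mul, ← mul_assoc]; exact hx _
    have h3 := W.add_mem h1 h2
    rw [← map_add, add_sub_cancel, homogeneousComponent_eq_self (isHomogeneous_monomial a hu)] at h3
    exact h3
  rw [eq_top_iff]
  intro f _
  induction f using MvPolynomial.induction_on' with
  | monomial v c => exact key _ v rfl c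
  | add p q hp hq => exact W.add_mem (hp trivial) (hq trivial)

/-- division with remainder of exponents -/
noncomputable def bigPsi {k : Type*} [Field k] {σ : Type*} [Finite σ] (d : σ → ℕ)
    (hd : ∀ s, 0 < d s) :
    MvPolynomial σ k →ₗ[k] ({b : σ →₀ ℕ // ∀ s, b s < d s} →₀ MvPolynomial σ k) :=
  (basisMonomials σ k).constr k (fun u =>
    Finsupp.single ⟨Finsupp.equivFunOnFinite.symm (fun s => u s % d s),
      fun s => by simpa using Nat.mod_lt _ (hd s)⟩
      (monomial (Finsupp.equivFunOnFinite.symm (fun s => u s / d s)) 1))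

lemma bigPsi_monomial {k : Type*} [Field k] {σ : Type*} [Finite σ] (d : σ → ℕ)
    (hd : ∀ s, 0 < d s) (u : σ →₀ ℕ) :
    bigPsi d hd (monomial u (1 : k)) =
    Finsupp.single ⟨Finsupp.equivFunOnFinite.symm (fun s => u s % d s),
      fun s => by simpa using Nat.mod_lt _ (hd s)⟩
      (monomial (Finsupp.equivFunOnFinite.symm (fun s => u s / d s)) 1) := by
  have h : monomial u (1 : k) = basisMonomials σ k u := by simp
  rw [bigPsi, h, Module.Basis.constr_basis]

lemma bigPsi_surj {k : Type*} [Field k] {σ : Type*} [Finite σ] (d : σ → ℕ)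
    (hd : ∀ s, 0 < d s) : Function.Surjective (bigPsi (k := k) d hd) := by
  rw [← LinearMap.range_eq_top, eq_top_iff]
  intro w _
  induction w using Finsupp.induction_linear with
  | zero => exact Submodule.zero_mem _
  | add f g hf hg => exact Submodule.add_mem _ (hf trivial) (hg trivial)
  | single b p =>
    induction p using MvPolynomial.induction_on' with
    | add p q hp hq =>
      rw [Finsupp.single_add]; exact Submodule.add_mem _ (hp trivial) (hq trivial)
    | monomial a c =>
      refine ⟨c • monomial (Finsupp.equivFunOnFinite.symm (fun s => d s * a s + b.1 s)) 1, ?_⟩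
      rw [map_smul, bigPsi_monomial, Finsupp.smul_single, smul_monomial, smul_eq_mul, mul_one]
      congr 2
      · ext s
        simp [Nat.mod_eq_of_lt (b.2 s)]
      · congr 1
        ext s
        simp [Nat.mul_add_div (hd s), Nat.div_eq_of_lt (b.2 s)]

lemma phi_hom {k : Type*} [Field k] {σ : Type*} [Finite σ] (d : σ → ℕ)
    (hd : ∀ s, 0 < d s)
    (z : σ → MvPolynomial σ k) (hz : ∀ s, (z s).IsHomogeneous (d s)) (u : σ →₀ ℕ) :
    (bigPhi d z (bigPsi d hd (monomial u (1 : k)))).IsHomogeneous u.degree := by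
  have := Fintype.ofFinite σ
  rw [bigPsi_monomial, bigPhi_single, aeval_monomial, map_one, one_mul,
    Finsupp.prod_fintype _ _ (by simp)]
  have h1 : (∏ i, z i ^ (Finsupp.equivFunOnFinite.symm (fun s => u s / d s)) i).IsHomogeneous
      (∑ s, d s * (u s / d s)) :=
    IsHomogeneous.prod _ _ _ (fun i _ => (hz i).pow _)
  convert h1.mul (isHomogeneous_monomial 1 rfl) using 1
  rw [Finsupp.degree_eq_sum, Finsupp.degree_eq_sum, ← Finset.sum_add_distrib]
  refine Finset.sum_congr rfl fun s _ => ?_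
  simp [Nat.div_add_mod]

lemma phi_comm {k : Type*} [Field k] {σ : Type*} [Finite σ] (d : σ → ℕ)
    (hd : ∀ s, 0 < d s)
    (z : σ → MvPolynomial σ k) (hz : ∀ s, (z s).IsHomogeneous (d s)) (m : ℕ)
    (f : MvPolynomial σ k) :
    homogeneousComponent m (bigPhi d z (bigPsi d hd f)) =
      bigPhi d z (bigPsi d hd (homogeneousComponent m f)) := by
  induction f using MvPolynomial.induction_on' with
  | add p q hp hq => simp only [map_add, hp, hq]
  | monomial u c =>
    have : monomial u c = c • monomial u (1 : k) := by simp [smul_monomial]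
    rw [this]
    simp only [map_smul]
    rw [homogeneousComponent_of_mem (phi_hom d hd z hz u),
      homogeneousComponent_of_mem (isHomogeneous_monomial 1 rfl)]
    split_ifs <;> simp

lemma bigPhi_inj {k : Type*} [Field k] {σ : Type*} [Finite σ] (d : σ → ℕ)
    (hd : ∀ s, 0 < d s)
    (z : σ → MvPolynomial σ k) (hz : ∀ s, (z s).IsHomogeneous (d s))
    (hs : Function.Surjective (bigPhi d z)) : Function.Injective (bigPhi d z) := by
  have hfin : ∀ m, FiniteDimensional k (homogeneousSubmodule σ k m) := by
    intro m
    have : homogeneousSubmodule σ k m ≤ Submodule.span k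
      ((fun u : σ →₀ ℕ => monomial u (1 : k)) '' {u | u.degree ≤ m}) := by
      intro f hf
      rw [f.as_sum]
      refine Submodule.sum_mem _ fun u hu => ?_
      have : monomial u (coeff u f) = coeff u f • monomial u (1 : k) := by simp [smul_monomial]
      rw [this]
      refine Submodule.smul_mem _ _ (Submodule.subset_span ⟨u, ?_, rfl⟩)
      rw [mem_support_iff] at hu
      have := hf hu
      rw [Set.mem_ofPred_eq, Finsupp.degree_eq_weight_one]
      exact this.le
    have hf : Set.Finite {u : σ →₀ ℕ | u.degree ≤ m} := Finsupp.finite_of_degree_le m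
    have := FiniteDimensional.span_of_finite k (hf.image (fun u : σ →₀ ℕ => monomial u (1 : k)))
    exact Submodule.finiteDimensional_of_le ‹_›
  set φ := bigPhi d z ∘ₗ bigPsi d hd with hφ
  have hφs : Function.Surjective φ := hs.comp (bigPsi_surj d hd)
  have hc : ∀ m f, homogeneousComponent m (φ f) = φ (homogeneousComponent m f) :=
    fun m f => phi_comm d hd z hz m f
  have hmap : ∀ m, ∀ f ∈ homogeneousSubmodule σ k m, φ f ∈ homogeneousSubmodule σ k m := by
    intro m f hf
    rw [← homogeneousComponent_eq_self hf, ← hc]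
    exact homogeneousComponent_mem _ _
  have hinj : ∀ m, Function.Injective (φ.restrict (hmap m)) := by
    intro m
    rw [LinearMap.injective_iff_surjective]
    rintro ⟨f, hf⟩
    obtain ⟨g, rfl⟩ := hφs f
    refine ⟨⟨homogeneousComponent m g, homogeneousComponent_mem _ _⟩, ?_⟩
    ext1
    simp only [LinearMap.coe_restrict_apply, ← hc]
    exact homogeneousComponent_eq_self hf
  rw [injective_iff_map_eq_zero]
  intro w hw
  obtain ⟨x, rfl⟩ := bigPsi_surj d hd w
  have hx : φ x = 0 := hw
  have : x = 0 := by
    rw [← sum_homogeneousComponent x]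
    refine Finset.sum_eq_zero fun m _ => ?_
    have h0 : φ.restrict (hmap m) ⟨homogeneousComponent m x, homogeneousComponent_mem _ _⟩ = 0 := by
      ext1
      simp only [LinearMap.coe_restrict_apply, ← hc, hx, map_zero, ZeroMemClass.coe_zero]
    have := (injective_iff_map_eq_zero _).1 (hinj m) _ h0
    exact congrArg Subtype.val this
  rw [this, map_zero]

theorem flat_of_param {k : Type*} [Field k] {σ : Type*} [Finite σ] (d : σ → ℕ)
    (hd : ∀ s, 0 < d s)
    (z : σ → MvPolynomial σ k) (hz : ∀ s, (z s).IsHomogeneous (d s))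
    (hT : ∀ f : MvPolynomial σ k, ∃ t ∈ Submodule.span k
      (Set.range fun b : {b : σ →₀ ℕ // ∀ s, b s < d s} => (monomial b.1 (1 : k))),
      f - t ∈ Ideal.span (Set.range z)) :
    (aeval z : MvPolynomial σ k →ₐ[k] MvPolynomial σ k).toRingHom.Flat := by
  have hs := bigPhi_surj d hd z hz hT
  refine flat_of_bij _ (fun b : {b : σ →₀ ℕ // ∀ s, b s < d s} => monomial b.1 (1 : k)) ?_
  have e : (fun w : {b : σ →₀ ℕ // ∀ s, b s < d s} →₀ MvPolynomial σ k =>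
      w.sum (fun b p => (aeval z : MvPolynomial σ k →ₐ[k] MvPolynomial σ k).toRingHom p *
        monomial b.1 (1 : k))) = bigPhi d z := by
    funext w
    rw [bigPhi_apply]; rfl
  rw [e]
  exact ⟨bigPhi_inj d hd z hz hs, hs⟩

lemma span_monos_aux {k Q : Type*} [Field k] [CommRing Q] [Nontrivial Q] [Algebra k Q] (n : ℕ)
    (t : Fin n → Q)
    (hp : ∏ j, (Polynomial.X - Polynomial.C (t j)) = (Polynomial.X : Polynomial Q) ^ n) (i : ℕ)
    (hi : i ≤ n) :
    ∀ x ∈ Algebra.adjoin k (t '' {j | j.1 < i}),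
    x ∈ Submodule.span k {x | ∃ b : Fin n → ℕ, (∀ j, b j < n - j.1) ∧
      (∀ j, i ≤ j.1 → b j = 0) ∧ x = ∏ j, t j ^ b j} := by
  induction i with
  | zero =>
    intro x hx
    simp only [not_lt_zero, Set.ofPred_false, Set.image_empty, Algebra.adjoin_empty] at hx
    obtain ⟨c, rfl⟩ := Algebra.mem_bot.1 hx
    rw [Algebra.algebraMap_eq_smul_one]
    refine Submodule.smul_mem _ _ (Submodule.subset_span ⟨fun _ => 0, ?_, ?_, ?_⟩)
    · intro j; have := j.2; show 0 < n - j.1; omega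
    · simp
    · simp
  | succ i ih =>
    have ih := ih (by omega)
    set A := Algebra.adjoin k (t '' {j | j.1 < i}) with hA
    set i' : Fin n := ⟨i, hi⟩ with hi'
    have htA : ∀ j : Fin n, j.1 < i → t j ∈ A := fun j hj =>
      Algebra.subset_adjoin ⟨j, hj, rfl⟩
    classical
    -- the monic polynomial killing `t i`
    obtain ⟨f, hfm, hfd, hf0⟩ : ∃ f : Polynomial A, f.Monic ∧ f.natDegree = n - i ∧
        Polynomial.aeval (t i') f = 0 := by
      let g : Polynomial A := ∏ j : {j : Fin n // j.1 < i},
        (Polynomial.X - Polynomial.C (⟨t j.1, htA j.1 j.2⟩ : A))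
      have hg : g.Monic := Polynomial.monic_prod_of_monic _ _ fun j _ => Polynomial.monic_X_sub_C _
      let h : Polynomial Q := ∏ j : {j : Fin n // ¬ j.1 < i},
        (Polynomial.X - Polynomial.C (t j.1))
      have hgh : g.map (algebraMap A Q) * h = Polynomial.X ^ n := by
        rw [← hp, ← Fintype.prod_subtype_mul_prod_subtype (fun j : Fin n => j.1 < i)]
        congr 1
        simp only [g, Polynomial.map_prod, Polynomial.map_sub, Polynomial.map_X, Polynomial.map_C]
        rfl
      have hh : h.Monic := Polynomial.monic_prod_of_monic _ _ fun j _ => Polynomial.monic_X_sub_C _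
      let f : Polynomial A := Polynomial.X ^ n /ₘ g
      have hfh : f.map (algebraMap A Q) = h := by
        simp only [f]
        rw [Polynomial.map_divByMonic _ hg, Polynomial.map_pow, Polynomial.map_X, ← hgh,
          Polynomial.mul_divByMonic_cancel_left _ (hg.map _)]
      have hinj : Function.Injective (algebraMap A Q) := Subtype.val_injective
      refine ⟨f, ?_, ?_, ?_⟩
      · rw [← hfh] at hh
        exact Polynomial.monic_of_injective hinj hh
      · rw [← Polynomial.natDegree_map_eq_of_injective hinj, hfh]
        simp only [h]
        rw [Polynomial.natDegree_prod_of_monic _ _ fun j _ => Polynomial.monic_X_sub_C _]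
        simp only [Polynomial.natDegree_X_sub_C, Finset.sum_const, smul_eq_mul, mul_one,
          Finset.card_univ]
        rw [Fintype.card_subtype_compl, Fintype.card_fin]
        congr 1
        rw [Fintype.card_subtype]
        rw [Fin.card_filter_val_lt]
        omega
      · rw [Polynomial.aeval_def, ← Polynomial.eval_map, hfh]
        simp only [h, Polynomial.eval_prod]
        exact Finset.prod_eq_zero (Finset.mem_univ ⟨i', by simp [hi']⟩) (by simp)
    intro x hx
    have hx' : ∃ p : Polynomial A, Polynomial.aeval (t i') p = x := by
      have : Algebra.adjoin k (t '' {j | j.1 < i + 1}) ≤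
          ((Polynomial.aeval (t i') : Polynomial A →ₐ[A] Q).restrictScalars k).range := by
        rw [Algebra.adjoin_le_iff]
        rintro _ ⟨j, hj, rfl⟩
        rcases Nat.lt_succ_iff_lt_or_eq.1 hj with h | h
        · exact ⟨Polynomial.C ⟨t j, htA j h⟩, by simp⟩
        · have : j = i' := Fin.ext h
          exact ⟨Polynomial.X, by simp [this]⟩
      exact this hx
    obtain ⟨p, rfl⟩ := hx'
    rw [← Polynomial.aeval_modByMonic_eq_self_of_root hf0]
    have hlt : (p %ₘ f).natDegree < n - i := by
      rw [← hfd]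
      refine Polynomial.natDegree_modByMonic_lt p hfm ?_
      rintro rfl
      simp at hfd
      omega
    rw [Polynomial.aeval_eq_sum_range' hlt]
    refine Submodule.sum_mem _ fun l hl => ?_
    rw [Finset.mem_range] at hl
    have h1 := ih _ ((p %ₘ f).coeff l).2
    have h2 : Submodule.span k {x | ∃ b : Fin n → ℕ, (∀ j, b j < n - j.1) ∧
      (∀ j, i ≤ j.1 → b j = 0) ∧ x = ∏ j, t j ^ b j} ≤ (Submodule.span k {x | ∃ b : Fin n → ℕ,
        (∀ j, b j < n - j.1) ∧
      (∀ j, i + 1 ≤ j.1 → b j = 0) ∧ x = ∏ j, t j ^ b j}).comap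
        (LinearMap.mulRight k (t i' ^ l)) := by
      rw [Submodule.span_le]
      rintro _ ⟨b, hb, hb0, rfl⟩
      refine Submodule.subset_span ⟨Function.update b i' l, ?_, ?_, ?_⟩
      · intro j
        by_cases hj : j = i'
        · subst hj; simpa using hl
        · simpa [hj] using hb j
      · intro j hj
        have : j ≠ i' := by rintro rfl; simp [hi'] at hj
        simpa [this] using hb0 j (by omega)
      · rw [LinearMap.mulRight_apply, ← Finset.mul_prod_erase _ _ (Finset.mem_univ i'),
          ← Finset.mul_prod_erase Finset.univ (fun j => t j ^ Function.update b i' l j)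
            (Finset.mem_univ i'), hb0 i' le_rfl, pow_zero, one_mul, mul_comm,
          Function.update_self]
        congr 1
        refine Finset.prod_congr rfl fun j hj => ?_
        rw [Function.update_of_ne (Finset.ne_of_mem_erase hj)]
    have h3 := h2 h1
    simpa [Algebra.smul_def] using h3


lemma flat_rename {k τ σ : Type*} [Field k] (ι : τ → σ) (hι : Function.Injective ι) :
    (rename ι : MvPolynomial τ k →ₐ[k] MvPolynomial σ k).toRingHom.Flat := by
  classical
  let e : ((Set.range ι)ᶜ : Set σ) ⊕ τ ≃ σ := (Equiv.sumComm _ _).trans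
    ((Equiv.sumCongr (Equiv.ofInjective ι hι) (Equiv.refl _)).trans (Equiv.Set.sumCompl _))
  have h1 : (C : MvPolynomial τ k →+*
      MvPolynomial ((Set.range ι)ᶜ : Set σ) (MvPolynomial τ k)).Flat := by
    have : (algebraMap (MvPolynomial τ k)
      (MvPolynomial ((Set.range ι)ᶜ : Set σ) (MvPolynomial τ k))).Flat := by
      rw [RingHom.flat_algebraMap_iff]
      infer_instance
    exact this
  let E := (sumAlgEquiv k ((Set.range ι)ᶜ : Set σ) τ).symm.trans (renameEquiv k e)
  have h2 : E.toAlgHom.toRingHom.Flat := RingHom.Flat.of_bijective E.bijective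
  convert h1.comp h2 using 1
  apply MvPolynomial.ringHom_ext
  · intro r
    simp [E]
  · intro i
    simp [E, e]

end Aux

open MvPolynomial in
/-- The Chevalley map `p : gl_n → 𝔸^n`, sending an `n×n` matrix to the
coefficients of its characteristic polynomial, is flat; i.e. the corresponding ring map
`k[𝔸^n] → k[gl_n]`, sending the `i`-th coordinate to the `i`-th coefficient of the
characteristic polynomial of the generic matrix, is flat. -/
theorem chevalley_map_flat (k : Type*) [Field k] (n : ℕ) (hn : 0 < n) :
    RingHom.Flat
      ((MvPolynomial.aeval (R := k)
        (fun i : Fin n =>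
          (Matrix.charpoly
            (Matrix.of fun i j : Fin n =>
              (MvPolynomial.X (i, j) : MvPolynomial (Fin n × Fin n) k))).coeff i)
        : MvPolynomial (Fin n) k →ₐ[k] MvPolynomial (Fin n × Fin n) k).toRingHom) := by
  classical
  let d : Fin n × Fin n → ℕ := fun s => if s.1 = s.2 then n - s.1 else 1
  let M : Matrix (Fin n) (Fin n) (MvPolynomial (Fin n × Fin n) k) := Matrix.of fun i j => X (i, j)
  let z : Fin n × Fin n → MvPolynomial (Fin n × Fin n) k := fun s =>
    if s.1 = s.2 then M.charpoly.coeff s.1 else X s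
  have hflat : (aeval z : MvPolynomial (Fin n × Fin n) k →ₐ[k]
      MvPolynomial (Fin n × Fin n) k).toRingHom.Flat := by
    apply flat_of_param d
    · intro s
      have := s.1.2
      simp only [d]; split_ifs <;> omega
    · intro s
      simp only [d, z]
      split_ifs
      · refine Matrix.charpoly.univ_coeff_isHomogeneous k (Fin n) s.1 _ ?_
        have := s.1.2
        rw [Fintype.card_fin]; omega
      · exact isHomogeneous_X _ _
    · intro f
      set I := Ideal.span (Set.range z) with hI
      let π := Ideal.Quotient.mkₐ k I
      have hπz : ∀ s, π (z s) = 0 := fun s =>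
        Ideal.Quotient.eq_zero_iff_mem.2 (Ideal.subset_span ⟨s, rfl⟩)
      have hπs : Function.Surjective π := Ideal.Quotient.mkₐ_surjective k I
      let t : Fin n → (MvPolynomial (Fin n × Fin n) k ⧸ I) := fun j => π (X (j, j))
      have hoff : ∀ i j, i ≠ j → π (X (i, j)) = 0 := by
        intro i j hij
        have := hπz (i, j)
        simpa [z, hij] using this
      suffices hmem : π f ∈ Submodule.map π.toLinearMap (Submodule.span k
          (Set.range fun b : {b : Fin n × Fin n →₀ ℕ // ∀ s, b s < d s} =>
            (monomial b.1 (1 : k)))) by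
        obtain ⟨t, ht, htf⟩ := hmem
        refine ⟨t, ht, ?_⟩
        rw [← Ideal.Quotient.eq_zero_iff_mem]
        have htf : π t = π f := htf
        show π (f - t) = 0
        rw [map_sub, htf, sub_self]
      cases subsingleton_or_nontrivial (MvPolynomial (Fin n × Fin n) k ⧸ I) with
      | inl h => rw [Subsingleton.elim (π f) 0]; exact Submodule.zero_mem _
      | inr h =>
      have hMπ : M.map π = Matrix.diagonal t := by
        ext i j
        by_cases hij : i = j
        · subst hij; simp [M, t]
        · simp [M, hij, hoff i j hij]
      have hp : ∏ j, (Polynomial.X - Polynomial.C (t j)) =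
          (Polynomial.X : Polynomial (MvPolynomial (Fin n × Fin n) k ⧸ I)) ^ n := by
        have h1 : (Matrix.diagonal t).charpoly = ∏ j, (Polynomial.X - Polynomial.C (t j)) := by
          rw [Matrix.charpoly_of_isUpperTriangular _ (Matrix.blockTriangular_diagonal t)]
          simp
        have h2 : (Matrix.diagonal t).charpoly = M.charpoly.map π.toRingHom := by
          rw [← Matrix.charpoly_map, ← hMπ]; rfl
        rw [← h1]
        have hdeg := Matrix.charpoly_natDegree_eq_dim (Matrix.diagonal t)
        have hmon := Matrix.charpoly_monic (Matrix.diagonal t)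
        rw [Fintype.card_fin] at hdeg
        ext i
        rw [Polynomial.coeff_X_pow]
        rcases lt_trichotomy i n with hlt | heq | hgt
        · rw [if_neg hlt.ne, h2, Polynomial.coeff_map]
          have := hπz (⟨i, hlt⟩, ⟨i, hlt⟩)
          simpa [z] using this
        · rw [if_pos heq, heq]
          have h3 : _ = _ := hmon
          rw [Polynomial.leadingCoeff, hdeg] at h3
          exact h3
        · rw [if_neg hgt.ne', Polynomial.coeff_eq_zero_of_natDegree_lt (by omega)]
      have hall : π f ∈ Algebra.adjoin k (t '' {j | j.1 < n}) := by
        induction f using MvPolynomial.induction_on with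
        | C a =>
          have : π (C a) = algebraMap k _ a := π.commutes a
          rw [this]; exact Subalgebra.algebraMap_mem _ _
        | add p q hp hq => rw [map_add]; exact Subalgebra.add_mem _ hp hq
        | mul_X p s hp =>
          rw [map_mul]
          refine Subalgebra.mul_mem _ hp ?_
          obtain ⟨i, j⟩ := s
          by_cases hij : i = j
          · subst hij; exact Algebra.subset_adjoin ⟨i, i.2, rfl⟩
          · rw [hoff i j hij]; exact Subalgebra.zero_mem _
      have hsp := span_monos_aux n t hp n le_rfl _ hall
      refine (Submodule.span_le.2 ?_) hsp
      rintro _ ⟨b, hb, -, rfl⟩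
      let b' : Fin n × Fin n →₀ ℕ := Finsupp.equivFunOnFinite.symm
        (fun s => if s.1 = s.2 then b s.1 else 0)
      have hb' : ∀ s, b' s < d s := by
        intro s
        simp only [b', d, Finsupp.equivFunOnFinite_symm_apply_apply]
        split_ifs
        · exact hb _
        · exact one_pos
      refine ⟨monomial b' 1, Submodule.subset_span ⟨⟨b', hb'⟩, rfl⟩, ?_⟩
      show π (monomial b' 1) = _
      rw [monomial_eq, map_mul, Finsupp.prod_fintype _ _ (by simp), C_1, map_one, one_mul, map_prod,
        Fintype.prod_prod_type]
      refine Finset.prod_congr rfl fun i _ => ?_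
      rw [Finset.prod_eq_single i]
      · simp [b', t]
      · intro j _ hj
        simp [b', hj.symm]
      · simp
  have hren : (rename (fun i : Fin n => (i, i)) : MvPolynomial (Fin n) k →ₐ[k]
      MvPolynomial (Fin n × Fin n) k).toRingHom.Flat :=
    flat_rename _ (fun i j h => (Prod.ext_iff.1 h).1)
  convert hren.comp hflat using 1
  have : (aeval (fun i : Fin n => M.charpoly.coeff i) : MvPolynomial (Fin n) k →ₐ[k]
      MvPolynomial (Fin n × Fin n) k) = (aeval z).comp (rename (fun i : Fin n => (i, i))) := by
    ext i : 1
    simp [z]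
  exact congrArg AlgHom.toRingHom this
end

section
/- Let k be a field, n a positive integer, t the space of diagonal n×n matrices, and q: t → A^n the map sending a diagonal matrix to the coefficients of its characteristic polynomial (equivalently, the elementary symmetric polynomials of its entries). Then q is flat. -/
universe u

/-- A ring map that is a retract of a flat ring map under the same source is flat. -/
lemma flat_of_retract {A B T : Type*} [CommRing A] [CommRing B] [CommRing T]
    {i : A →+* B} {j : A →+* T} (hi : i.Flat) (f : B →+* T) (g : T →+* B)
    (hf : f.comp i = j) (hg : g.comp j = i) (hfg : f.comp g = RingHom.id T) : j.Flat := by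
  algebraize [i, j]
  let f' : B →ₐ[A] T := { f with commutes' := fun a => RingHom.congr_fun hf a }
  let g' : T →ₐ[A] B := { g with commutes' := fun a => RingHom.congr_fun hg a }
  exact Module.Flat.of_retract g'.toLinearMap f'.toLinearMap
    (LinearMap.ext fun x => RingHom.congr_fun hfg x)

open Polynomial in
/-- Every monic polynomial acquires a (weakly) universal splitting over a flat extension. -/
lemma exists_flat_splitting : ∀ (n : ℕ) (R : Type u) [CommRing R] [Nontrivial R] (p : R[X]),
    p.Monic → p.natDegree = n → ∃ (B : Type u) (_ : CommRing B) (ι : R →+* B) (r : Fin n → B),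
      ι.Flat ∧ p.map ι = ∏ i, (X - C (r i)) ∧
      ∀ (S : Type u) [CommRing S] (φ : R →+* S) (s : Fin n → S),
        p.map φ = ∏ i, (X - C (s i)) → ∃ f : B →+* S, f.comp ι = φ ∧ ∀ i, f (r i) = s i := by
  intro n
  induction n with
  | zero =>
    intro R _ _ p hp hd
    refine ⟨R, inferInstance, RingHom.id R, Fin.elim0, RingHom.Flat.id R, ?_, ?_⟩
    · simp [hp.natDegree_eq_zero.mp hd]
    · intro S _ φ s _
      exact ⟨φ, by simp, fun i => i.elim0⟩
  | succ n ih =>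
    intro R _ _ p hp hd
    have hfree : Module.Free R (AdjoinRoot p) := hp.free_adjoinRoot
    have hnt : Nontrivial (AdjoinRoot p) := by
      refine Ideal.Quotient.nontrivial_iff.mpr ?_
      rw [Ne, Ideal.span_singleton_eq_top]
      intro hu
      rw [hp.eq_one_of_isUnit hu, natDegree_one] at hd
      omega
    have hpm : (p.map (AdjoinRoot.of p)).Monic := hp.map _
    have hmul : (X - C (AdjoinRoot.root p)) *
        (p.map (AdjoinRoot.of p) /ₘ (X - C (AdjoinRoot.root p))) = p.map (AdjoinRoot.of p) :=
      mul_divByMonic_eq_iff_isRoot.mpr (AdjoinRoot.isRoot_root p)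
    set q := p.map (AdjoinRoot.of p) /ₘ (X - C (AdjoinRoot.root p)) with hq
    have hqm : q.Monic := by
      rw [← hmul] at hpm
      exact (monic_X_sub_C _).of_mul_monic_left hpm
    have hqd : q.natDegree = n := by
      have h1 := (monic_X_sub_C (AdjoinRoot.root p)).natDegree_mul hqm
      rw [hmul, hp.natDegree_map, hd, natDegree_X_sub_C] at h1
      omega
    obtain ⟨B, _, ι, r, hfl, hprod, huniv⟩ := ih (AdjoinRoot p) q hqm hqd
    refine ⟨B, inferInstance, ι.comp (AdjoinRoot.of p), Fin.cons (ι (AdjoinRoot.root p)) r,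
      ?_, ?_, ?_⟩
    · refine RingHom.Flat.comp ?_ hfl
      have : (algebraMap R (AdjoinRoot p)).Flat := by
        rw [RingHom.flat_algebraMap_iff]; infer_instance
      exact this
    · rw [← Polynomial.map_map, ← hmul, Polynomial.map_mul, hprod, Fin.prod_univ_succ]
      simp
    · intro S _ φ s hs
      have hroot : p.eval₂ φ (s 0) = 0 := by
        rw [← eval_map, hs, Fin.prod_univ_succ]
        simp
      let ψ : AdjoinRoot p →+* S := AdjoinRoot.lift φ (s 0) hroot
      have hψ : ψ.comp (AdjoinRoot.of p) = φ := by
        ext x; simp [ψ]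
      have hψr : ψ (AdjoinRoot.root p) = s 0 := by simp [ψ]
      have hqs : q.map ψ = ∏ i : Fin n, (X - C (s i.succ)) := by
        rw [← hψ, ← Polynomial.map_map, ← hmul, Polynomial.map_mul, Fin.prod_univ_succ] at hs
        simp only [Polynomial.map_sub, map_X, map_C, hψr] at hs
        exact (monic_X_sub_C (s 0)).isRegular.left hs
      obtain ⟨f, hf, hfr⟩ := huniv S ψ (fun i => s i.succ) hqs
      refine ⟨f, ?_, ?_⟩
      · rw [← RingHom.comp_assoc, hf, hψ]
      · intro i
        refine Fin.cases ?_ (fun i => ?_) i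
        · simp only [Fin.cons_zero]
          rw [← RingHom.comp_apply, hf, hψr]
        · simpa using hfr i

/-- The map `q : t → 𝔸^n` from the diagonal matrices to `𝔸^n`, sending a
diagonal matrix to the coefficients of its characteristic polynomial (equivalently, given
by the elementary symmetric polynomials of its entries), is flat; i.e. the ring map
`k[𝔸^n] → k[t]` sending the `i`-th coordinate to the `i`-th coefficient of the
characteristic polynomial of the generic diagonal matrix is flat. -/
theorem diagonal_chevalley_map_flat (k : Type*) [Field k] (n : ℕ) (hn : 0 < n) :
    RingHom.Flat
      ((MvPolynomial.aeval (R := k)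
        (fun i : Fin n =>
          (Matrix.charpoly
            (Matrix.diagonal fun j : Fin n =>
              (MvPolynomial.X j : MvPolynomial (Fin n) k))).coeff i)
        : MvPolynomial (Fin n) k →ₐ[k] MvPolynomial (Fin n) k).toRingHom) := by
  have hcp : Matrix.charpoly (Matrix.diagonal fun j : Fin n =>
      (MvPolynomial.X j : MvPolynomial (Fin n) k)) =
      ∏ j, (Polynomial.X - Polynomial.C (MvPolynomial.X j)) := Matrix.charpoly_diagonal _
  rw [hcp]
  set P : Polynomial (MvPolynomial (Fin n) k) :=
    ∏ j : Fin n, (Polynomial.X - Polynomial.C (MvPolynomial.X j)) with hP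
  have hPm : P.Monic := Polynomial.monic_prod_of_monic _ _ fun j _ => Polynomial.monic_X_sub_C _
  have hPd : P.natDegree = n := by simp [hP, Polynomial.natDegree_prod_of_monic,
    Polynomial.monic_X_sub_C]
  set Q : MvPolynomial (Fin n) k →ₐ[k] MvPolynomial (Fin n) k :=
    MvPolynomial.aeval (fun i : Fin n => P.coeff i) with hQ
  obtain ⟨B, _, ι, r, hfl, hprod, huniv⟩ := exists_flat_splitting n (MvPolynomial (Fin n) k)
    (Polynomial.freeMonic k n) (Polynomial.monic_freeMonic k n) (Polynomial.natDegree_freeMonic k n)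
  have hmap : (Polynomial.freeMonic k n).map Q.toRingHom = P := by
    ext1 i
    rw [Polynomial.coeff_map, Polynomial.coeff_freeMonic]
    split_ifs with h1 h2
    · simp [hQ]
    · subst h2
      have := hPm.coeff_natDegree
      rw [hPd] at this
      simp [this]
    · rw [Polynomial.coeff_eq_zero_of_natDegree_lt (by omega)]
      simp
  obtain ⟨f, hf, hfr⟩ := huniv _ Q.toRingHom (fun i => MvPolynomial.X i) hmap
  let g : MvPolynomial (Fin n) k →+* B :=
    MvPolynomial.eval₂Hom (ι.comp MvPolynomial.C) r
  have hgP : P.map g = (Polynomial.freeMonic k n).map ι := by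
    rw [hprod, hP, Polynomial.map_prod]
    simp [g]
  have hg : g.comp Q.toRingHom = ι := by
    refine MvPolynomial.ringHom_ext (fun a => ?_) (fun i => ?_)
    · simp [g]
    · have := congrArg (fun p => p.coeff (i : ℕ)) hgP
      simp only [Polynomial.coeff_map, Polynomial.coeff_freeMonic] at this
      simpa [hQ] using this
  have hfg : f.comp g = RingHom.id _ := by
    refine MvPolynomial.ringHom_ext (fun a => ?_) (fun i => ?_)
    · have := congrArg (fun h => h (MvPolynomial.C a)) hf
      simpa [g] using this
    · simp [g, hfr]
  exact flat_of_retract hfl f g hf hg hfg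
end
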